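/- Let l = 5 and m = 3, and consider the trivariate bicycle code with A = x⁴ + x² and B = x + x² + y + z² + z³ (the weight-7 [[30,4,5]] code). Its Tanner graph has a spanning subgraph isomorphic to the Cayley graph of ZMod 10 × ZMod 6; that is, the code has a toric layout with μ = 5 and λ = 3. -/

import Mathlib

/-- The translation matrix `P(g)` over `𝔽₂`: `P(g)_{h,h'} = 1` iff `h = g + h'`. -/
def Pmat {G : Type*} [AddGroup G] [DecidableEq G] (g : G) : Matrix G G (ZMod 2) :=
  Matrix.of fun h h' => if h = g + h' then 1 else 0

/-- Vertex types of the Tanner graph: X-checks, Z-checks, L-data, R-data. -/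
inductive VType : Type
  | X | Z | L | R

/-- The Tanner graph of a two-block code with matrices `A`, `B`. -/
def TannerGraph {G : Type*} (A B : Matrix G G (ZMod 2)) :
    SimpleGraph (VType × G) :=
  SimpleGraph.fromRel fun u v =>
    (u.1 = VType.X ∧ v.1 = VType.L ∧ A u.2 v.2 = 1) ∨
    (u.1 = VType.X ∧ v.1 = VType.R ∧ B u.2 v.2 = 1) ∨
    (u.1 = VType.Z ∧ v.1 = VType.L ∧ B v.2 u.2 = 1) ∨
    (u.1 = VType.Z ∧ v.1 = VType.R ∧ A v.2 u.2 = 1)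

/-- The Cayley graph of `ZMod (2μ) × ZMod (2λ)`: distinct vertices `u`, `v` are
adjacent iff `u - v ∈ {(1,0), (-1,0), (0,1), (0,-1)}`. -/
def CayleyGraph (μ lam : ℕ) : SimpleGraph (ZMod (2 * μ) × ZMod (2 * lam)) :=
  SimpleGraph.fromRel fun u v =>
    u - v = (1, 0) ∨ u - v = (-1, 0) ∨ u - v = (0, 1) ∨ u - v = (0, -1)

/-- `x = P(1,0)` over `G = ZMod 5 × ZMod 3`. -/
def xP : Matrix (ZMod 5 × ZMod 3) (ZMod 5 × ZMod 3) (ZMod 2) := Pmat (1, 0)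

/-- `y = P(0,1)` over `G = ZMod 5 × ZMod 3`. -/
def yP : Matrix (ZMod 5 × ZMod 3) (ZMod 5 × ZMod 3) (ZMod 2) := Pmat (0, 1)

/-- `z = P(1,1)` over `G = ZMod 5 × ZMod 3`. -/
def zP : Matrix (ZMod 5 × ZMod 3) (ZMod 5 × ZMod 3) (ZMod 2) := Pmat (1, 1)

/-- `A = x⁴ + x²` of the weight-7 `[[30,4,5]]` code. -/
def Amat : Matrix (ZMod 5 × ZMod 3) (ZMod 5 × ZMod 3) (ZMod 2) := xP ^ 4 + xP ^ 2

/-- `B = x + x² + y + z² + z³` of the weight-7 `[[30,4,5]]` code. -/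
def Bmat : Matrix (ZMod 5 × ZMod 3) (ZMod 5 × ZMod 3) (ZMod 2) :=
  xP + xP ^ 2 + yP + zP ^ 2 + zP ^ 3

/-- Decidable equality on vertex types. -/
instance vtypeDecEq : DecidableEq VType := fun a b => by
  cases a <;> cases b <;> first
    | exact isTrue rfl
    | exact isFalse (by intro h; cases h)

theorem Pmat_mul {G : Type*} [AddGroup G] [DecidableEq G] [Fintype G] (g h : G) :
    Pmat g * Pmat h = Pmat (g + h) := by
  ext a b
  simp [Pmat, Matrix.mul_apply, add_assoc]

theorem Pmat_pow {G : Type*} [AddGroup G] [DecidableEq G] [Fintype G] (g : G) (n : ℕ) :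
    Pmat g ^ n = Pmat (n • g) := by
  induction n with
  | zero =>
    ext a b
    simp [Pmat, Matrix.one_apply]
  | succ n ih => rw [pow_succ, ih, Pmat_mul, succ_nsmul]

theorem Amat_apply (r c : ZMod 5 × ZMod 3) (h : r = (4, 0) + c ∨ r = (2, 0) + c) :
    Amat r c = 1 := by
  have hA : Amat = Pmat (4, 0) + Pmat (2, 0) := by
    simp only [Amat, xP, Pmat_pow]
    rfl
  rw [hA]
  revert r c
  simp only [Pmat, Matrix.add_apply, Matrix.of_apply]
  rintro r ⟨c, d⟩ (rfl | rfl) <;> revert c d <;> decide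

theorem Bmat_apply (r c : ZMod 5 × ZMod 3) (h : r = (2, 2) + c ∨ r = (2, 0) + c) :
    Bmat r c = 1 := by
  have hB : Bmat = Pmat (1, 0) + Pmat (2, 0) + Pmat (0, 1) + Pmat (2, 2) + Pmat (3, 0) := by
    simp only [Bmat, xP, yP, zP, Pmat_pow]
    rfl
  rw [hB]
  revert r c
  simp only [Pmat, Matrix.add_apply, Matrix.of_apply]
  rintro r ⟨c, d⟩ (rfl | rfl) <;> revert c d <;> decide

/-- The toric layout, from the torus to the Tanner graph vertices. -/
def layout (u : ZMod 10 × ZMod 6) : VType × (ZMod 5 × ZMod 3) :=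
  let a : ZMod 5 := ((u.1.val / 2 : ℕ) : ZMod 5)
  let b : ZMod 3 := ((u.2.val / 2 : ℕ) : ZMod 3)
  if u.1.val % 2 = 0 then
    if u.2.val % 2 = 0 then (VType.X, (3 * a, b)) else (VType.R, (3 * a - 2, b - 2))
  else
    if u.2.val % 2 = 0 then (VType.L, (3 * a - 4, b)) else (VType.Z, (3 * a - 6, b - 2))

/-- The inverse of `layout`. -/
def layoutInv (w : VType × (ZMod 5 × ZMod 3)) : ZMod 10 × ZMod 6 :=
  match w with
  | (VType.X, (p, q)) => (((2 * (2 * p).val : ℕ) : ZMod 10), ((2 * q.val : ℕ) : ZMod 6))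
  | (VType.R, (p, q)) =>
    (((2 * (2 * (p + 2)).val : ℕ) : ZMod 10), ((2 * (q + 2).val + 1 : ℕ) : ZMod 6))
  | (VType.L, (p, q)) =>
    (((2 * (2 * (p + 4)).val + 1 : ℕ) : ZMod 10), ((2 * q.val : ℕ) : ZMod 6))
  | (VType.Z, (p, q)) =>
    (((2 * (2 * (p + 6)).val + 1 : ℕ) : ZMod 10), ((2 * (q + 2).val + 1 : ℕ) : ZMod 6))

/-- The layout as an equivalence. -/
def layoutEquiv : (ZMod 10 × ZMod 6) ≃ VType × (ZMod 5 × ZMod 3) where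
  toFun := layout
  invFun := layoutInv
  left_inv := by
    rintro ⟨i, j⟩
    revert i j
    decide
  right_inv := by
    rintro ⟨t, p, q⟩
    cases t <;> revert p q <;> decide

/-- The edges of the Tanner graph used by the layout, oriented from checks to data. -/
def layoutRel (u v : VType × (ZMod 5 × ZMod 3)) : Prop :=
  (u.1 = VType.X ∧ v.1 = VType.L ∧ (u.2 = (4, 0) + v.2 ∨ u.2 = (2, 0) + v.2)) ∨
  (u.1 = VType.X ∧ v.1 = VType.R ∧ (u.2 = (2, 2) + v.2 ∨ u.2 = (2, 0) + v.2)) ∨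
  (u.1 = VType.Z ∧ v.1 = VType.L ∧ (v.2 = (2, 2) + u.2 ∨ v.2 = (2, 0) + u.2)) ∨
  (u.1 = VType.Z ∧ v.1 = VType.R ∧ (v.2 = (4, 0) + u.2 ∨ v.2 = (2, 0) + u.2))

instance layoutRelDec (u v : VType × (ZMod 5 × ZMod 3)) : Decidable (layoutRel u v) := by
  unfold layoutRel
  infer_instance

theorem tanner_adj_of_layoutRel (u v : VType × (ZMod 5 × ZMod 3)) (h : layoutRel u v) :
    (TannerGraph Amat Bmat).Adj u v := by
  rw [TannerGraph, SimpleGraph.fromRel_adj]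
  refine ⟨?_, Or.inl ?_⟩
  · rintro rfl
    rcases h with ⟨h1, h2, _⟩ | ⟨h1, h2, _⟩ | ⟨h1, h2, _⟩ | ⟨h1, h2, _⟩ <;>
      exact absurd (h1.symm.trans h2) (by decide)
  · rcases h with ⟨h1, h2, h⟩ | ⟨h1, h2, h⟩ | ⟨h1, h2, h⟩ | ⟨h1, h2, h⟩
    · exact Or.inl ⟨h1, h2, Amat_apply _ _ h⟩
    · exact Or.inr (Or.inl ⟨h1, h2, Bmat_apply _ _ h⟩)
    · exact Or.inr (Or.inr (Or.inl ⟨h1, h2, Bmat_apply _ _ h⟩))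
    · exact Or.inr (Or.inr (Or.inr ⟨h1, h2, Amat_apply _ _ h⟩))

theorem layout_step_right : ∀ (i : ZMod 10) (j : ZMod 6),
    layoutRel (layout (i, j)) (layout (i + 1, j)) ∨
      layoutRel (layout (i + 1, j)) (layout (i, j)) := by
  decide

theorem layout_step_up : ∀ (i : ZMod 10) (j : ZMod 6),
    layoutRel (layout (i, j)) (layout (i, j + 1)) ∨
      layoutRel (layout (i, j + 1)) (layout (i, j)) := by
  decide

theorem tanner_step_right (i : ZMod 10) (j : ZMod 6) :
    (TannerGraph Amat Bmat).Adj (layout (i, j)) (layout (i + 1, j)) :=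
  (layout_step_right i j).elim (tanner_adj_of_layoutRel _ _)
    fun h => (tanner_adj_of_layoutRel _ _ h).symm

theorem tanner_step_up (i : ZMod 10) (j : ZMod 6) :
    (TannerGraph Amat Bmat).Adj (layout (i, j)) (layout (i, j + 1)) :=
  (layout_step_up i j).elim (tanner_adj_of_layoutRel _ _)
    fun h => (tanner_adj_of_layoutRel _ _ h).symm

theorem tanner_of_diff (u v : ZMod 10 × ZMod 6)
    (h : u - v = (1, 0) ∨ u - v = (-1, 0) ∨ u - v = (0, 1) ∨ u - v = (0, -1)) :
    (TannerGraph Amat Bmat).Adj (layout u) (layout v) := by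
  obtain ⟨i, j⟩ := u
  obtain ⟨k, l⟩ := v
  simp only [Prod.mk_sub_mk, Prod.mk.injEq] at h
  rcases h with ⟨h1, h2⟩ | ⟨h1, h2⟩ | ⟨h1, h2⟩ | ⟨h1, h2⟩
  · obtain rfl : i = k + 1 := by linear_combination h1
    obtain rfl : j = l := by linear_combination h2
    exact (tanner_step_right _ _).symm
  · obtain rfl : k = i + 1 := by linear_combination -h1
    obtain rfl : j = l := by linear_combination h2
    exact tanner_step_right _ _
  · obtain rfl : i = k := by linear_combination h1
    obtain rfl : j = l + 1 := by linear_combination h2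
    exact (tanner_step_up _ _).symm
  · obtain rfl : i = k := by linear_combination h1
    obtain rfl : l = j + 1 := by linear_combination -h2
    exact tanner_step_up _ _

/-- The Tanner graph of the weight-7 `[[30,4,5]]` trivariate bicycle code
(`l = 5`, `m = 3`, `A = x⁴ + x²`, `B = x + x² + y + z² + z³`) has a spanning
subgraph isomorphic to the Cayley graph of `ZMod 10 × ZMod 6`, i.e. the code has
a toric layout with `μ = 5` and `λ = 3`. -/
theorem stmt18 :
    ∃ H : SimpleGraph (VType × (ZMod 5 × ZMod 3)), H ≤ TannerGraph Amat Bmat ∧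
      Nonempty (H ≃g CayleyGraph 5 3) := by
  let e : VType × (ZMod 5 × ZMod 3) ≃ ZMod (2 * 5) × ZMod (2 * 3) := layoutEquiv.symm
  refine ⟨(CayleyGraph 5 3).comap e, ?_, ⟨SimpleGraph.Iso.comap e _⟩⟩
  intro u v h
  rw [SimpleGraph.comap_adj, CayleyGraph, SimpleGraph.fromRel_adj] at h
  have hu : layout (e u) = u := layoutEquiv.apply_symm_apply u
  have hv : layout (e v) = v := layoutEquiv.apply_symm_apply v
  rw [← hu, ← hv]
  rcases h.2 with h | h
  · exact tanner_of_diff _ _ h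
  · exact (tanner_of_diff _ _ h).symm
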